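/- For every real t ≥ 1 there exists n ∈ ℕ such that: (a) for all indices 0 ≤ a < b ≤ 4^n, the polygonal path with vertices K_n a, K_n (a+1), …, K_n b admits a Fréchet matching to the segment from K_n a to K_n b within 6 · dist (K_n a) (K_n b); and (b) for every m ≥ 1 and every sequence of indices q : Fin (m+1) → ℕ with q 0 = 0, q m = 4^n, q j ≤ 4^n for all j, and |q (j+1) − q j| = 1 for all j < m, the length ∑_{j<m} dist (K_n (q j)) (K_n (q (j+1))) exceeds t · dist (K_n 0) (K_n (4^n)). In particular the Koch path graph F_n is a 6-Fréchet-spanner but not a t-spanner. -/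

import Mathlib

/-- The uniform piecewise-linear parametrization of the polygonal path `p`:
on `[k/m, (k+1)/m]` it interpolates linearly from `p k` to `p (k+1)`. -/
noncomputable def polyParam {E : Type*} [NormedAddCommGroup E] [NormedSpace ℝ E]
    {m : ℕ} (p : Fin (m + 1) → E) (τ : ℝ) : E :=
  let k : ℕ := min ⌊τ * m⌋₊ (m - 1)
  p ⟨min k m, Nat.lt_succ_of_le (min_le_right _ _)⟩ +
    (τ * m - (k : ℝ)) •
      (p ⟨min (k + 1) m, Nat.lt_succ_of_le (min_le_right _ _)⟩ -
        p ⟨min k m, Nat.lt_succ_of_le (min_le_right _ _)⟩)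

/-- The polygonal path `p` admits a Fréchet matching to the segment from `u` to `v`
within `ε`: there are continuous monotone reparametrizations `φ, ψ` of `[0,1]`, fixing the
endpoints, such that at every time `τ` the point `γ_p (φ τ)` of the path and the point
`u + ψ τ • (v − u)` of the segment are at distance at most `ε`. -/
def FrechetMatchingWithin {E : Type*} [NormedAddCommGroup E] [NormedSpace ℝ E]
    {m : ℕ} (p : Fin (m + 1) → E) (u v : E) (ε : ℝ) : Prop :=
  ∃ φ ψ : ℝ → ℝ,
    ContinuousOn φ (Set.Icc 0 1) ∧ ContinuousOn ψ (Set.Icc 0 1) ∧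
    MonotoneOn φ (Set.Icc 0 1) ∧ MonotoneOn ψ (Set.Icc 0 1) ∧
    Set.MapsTo φ (Set.Icc 0 1) (Set.Icc 0 1) ∧ Set.MapsTo ψ (Set.Icc 0 1) (Set.Icc 0 1) ∧
    φ 0 = 0 ∧ ψ 0 = 0 ∧ φ 1 = 1 ∧ ψ 1 = 1 ∧
    ∀ τ ∈ Set.Icc (0 : ℝ) 1, dist (polyParam p (φ τ)) (u + ψ τ • (v - u)) ≤ ε


/-- The point of the Euclidean plane with the given coordinates. -/
noncomputable def pt (x y : ℝ) : EuclideanSpace ℝ (Fin 2) :=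
  (WithLp.equiv 2 (Fin 2 → ℝ)).symm ![x, y]

/-- Rotation by 90 degrees counterclockwise: `ρ(x, y) = (−y, x)`. -/
noncomputable def rot90 (x : EuclideanSpace ℝ (Fin 2)) : EuclideanSpace ℝ (Fin 2) :=
  pt (-x 1) (x 0)

/-- The vertices of the Koch polyline: `koch n k` is the `k`-th vertex (for `0 ≤ k ≤ 4^n`)
of the `n`-th stage `K_n` of the Koch curve construction, starting from the unit segment
from `(0,0)` to `(1,0)`.  Each edge `ab` of `K_n` is replaced in `K_{n+1}` by the four edges
through `a`, `a + (b−a)/3`, `(a+b)/2 + (√3/6)·ρ(b−a)`, `a + 2(b−a)/3`, `b`. -/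
noncomputable def koch : ℕ → ℕ → EuclideanSpace ℝ (Fin 2)
  | 0, k => if k = 0 then pt 0 0 else pt 1 0
  | n + 1, j =>
      let a := koch n (j / 4)
      let b := koch n (j / 4 + 1)
      if j % 4 = 0 then a
      else if j % 4 = 1 then a + (3 : ℝ)⁻¹ • (b - a)
      else if j % 4 = 2 then (2 : ℝ)⁻¹ • (a + b) + (Real.sqrt 3 / 6) • rot90 (b - a)
      else a + (2 / 3 : ℝ) • (b - a)

/-!
Every edge of `K_n` has length `3⁻ⁿ` and a walk between the extreme vertices has at least `4ⁿ`
steps, so its length is at least `(4/3)ⁿ`, which is unbounded. For the Fréchet bound it suffices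
that a vertex `K_n c` with `a ≤ c ≤ b` is at distance at most `6 * dist (K_n a) (K_n b)` from
`K_n a`: one can traverse the path while waiting at `K_n a`, and then the segment.

The polyline `K_(n+1)` consists of four copies of `K_n` scaled by `1/3`, each in a copy of a
triangle of diameter `1`. If `K_(n+1) a` and `K_(n+1) b` lie in the same copy, the bound follows by
induction; if a copy lies between theirs, they are at least `1/6` apart. If their copies are
adjacent, they are seen from the common vertex at an angle of at least `60°`, so their distances
to it add up to at most twice their distance; it remains to bound the arcs of `K_n` from an extreme
vertex to an arbitrary vertex, and these have diameter at most three times the distance of their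
endpoints.
-/

open AffineMap (lineMap)
open scoped ComplexConjugate InnerProductSpace

section PolygonalPath

variable {E : Type*} [NormedAddCommGroup E] [NormedSpace ℝ E] {m : ℕ} (p : Fin (m + 1) → E)

lemma polyParam_mem_of_convex {s : Set E} (hs : Convex ℝ s) (hp : ∀ i, p i ∈ s) {τ : ℝ}
    (hτ : τ ∈ Set.Icc 0 1) : polyParam p τ ∈ s := by
  have hτm : τ * m ≤ m := mul_le_of_le_one_left m.cast_nonneg hτ.2
  refine hs.add_smul_sub_mem (hp _) (hp _) ⟨?_, ?_⟩
  · have hfloor : (⌊τ * m⌋₊ : ℝ) ≤ τ * m :=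
      Nat.floor_le (mul_nonneg hτ.1 m.cast_nonneg)
    rw [sub_nonneg]
    exact (Nat.cast_le.2 (min_le_left _ _)).trans hfloor
  · rw [sub_le_iff_le_add']
    rcases min_choice ⌊τ * m⌋₊ (m - 1) with h | h <;> rw [h]
    · exact (Nat.lt_floor_add_one _).le
    · exact hτm.trans (by exact_mod_cast Nat.le_add_of_sub_le le_rfl)

lemma polyParam_one : polyParam p 1 = p (Fin.last m) := by
  cases m with
  | zero => simp [polyParam]
  | succ m =>
    have hfloor : ⌊(m : ℝ) + 1⌋₊ = m + 1 := mod_cast Nat.floor_natCast (m + 1)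
    simp [polyParam, hfloor, Fin.last]

/-- First traverse the path while waiting at `u`, then traverse the segment while waiting at the
end of the path. -/
lemma frechetMatchingWithin_of_dist_le {u : E} {ε : ℝ} (hp : ∀ i, dist (p i) u ≤ ε) :
    FrechetMatchingWithin p u (p (Fin.last m)) ε := by
  set v := p (Fin.last m) with hv
  have hvε : v ∈ Metric.closedBall v ε := Metric.mem_closedBall_self (dist_nonneg.trans (hp 0))
  have huε : u ∈ Metric.closedBall v ε := Metric.mem_closedBall'.2 (hp (Fin.last m))
  refine ⟨fun τ => min (2 * τ) 1, fun τ => max (2 * τ - 1) 0, by fun_prop, by fun_prop,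
    fun x _ y _ hxy => min_le_min_right 1 (by gcongr),
    fun x _ y _ hxy => max_le_max_right 0 (by gcongr),
    fun τ hτ => ⟨le_min (by linarith [hτ.1]) zero_le_one, min_le_right _ _⟩,
    fun τ hτ => ⟨le_max_right _ _, max_le (by linarith [hτ.2]) zero_le_one⟩,
    by simp, by simp, by norm_num, by norm_num, fun τ hτ => ?_⟩
  rcases le_total (2 * τ) 1 with h | h
  · simp only [min_eq_left h, max_eq_right (sub_nonpos.2 h), zero_smul, add_zero]
    exact polyParam_mem_of_convex p (convex_closedBall u ε) hp ⟨by linarith [hτ.1], h⟩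
  · simp only [min_eq_right h, max_eq_left (sub_nonneg.2 h), polyParam_one, ← hv]
    exact Metric.mem_closedBall'.1 <| (convex_closedBall v ε).add_smul_sub_mem huε hvε
      ⟨sub_nonneg.2 h, by linarith [hτ.2]⟩

end PolygonalPath

lemma exists_lt_exists_le_eq_mul_add {d N k : ℕ} (hN : 0 < N) (hk : k ≤ d * N) :
    ∃ q < N, ∃ r ≤ d, k = d * q + r := by
  rcases hk.lt_or_eq with hlt | rfl
  · exact ⟨k / d, Nat.div_lt_of_lt_mul hlt, k % d,
      (Nat.mod_lt k (Nat.pos_of_mul_pos_right (k.zero_le.trans_lt hlt))).le,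
      (Nat.div_add_mod k d).symm⟩
  · exact ⟨N - 1, Nat.sub_one_lt hN.ne', d, le_rfl, by rw [← Nat.mul_succ]; congr; omega⟩

lemma apply_last_le_apply_zero_add {m : ℕ} (q : Fin (m + 1) → ℕ)
    (hq : ∀ j : Fin m, q j.succ ≤ q j.castSucc + 1) : q (Fin.last m) ≤ q 0 + m := by
  have hle : ∀ j : Fin (m + 1), q j ≤ q 0 + j := by
    intro j
    induction j using Fin.induction with
    | zero => simp
    | succ j ih => exact (hq j).trans (by simpa [← add_assoc] using ih)
  exact hle (Fin.last m)

/-- The hypothesis says that the angle between `x` and `y` is at least `60°`. -/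
lemma norm_add_norm_le_two_mul_norm_sub {V : Type*} [SeminormedAddCommGroup V]
    [InnerProductSpace ℝ V] {x y : V} (h : 2 * ⟪x, y⟫_ℝ ≤ ‖x‖ * ‖y‖) :
    ‖x‖ + ‖y‖ ≤ 2 * ‖x - y‖ := by
  refine le_of_sq_le_sq ?_ (by positivity)
  nlinarith [norm_sub_sq_real x y, sq_nonneg (‖x‖ - ‖y‖)]

section Generator

/-- The vertices of the Koch generator `K_1` as complex numbers; from index `4` on they stay at
the endpoint `1`. -/
noncomputable def kochNode : ℕ → ℂ
  | 0 => 0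
  | 1 => 1 / 3
  | 2 => ⟨1 / 2, √3 / 6⟩
  | 3 => 2 / 3
  | _ + 4 => 1

/-- The similarity of the plane taking the unit segment to the `i`-th edge of the Koch generator;
the four of them form the iterated function system of the Koch curve. -/
noncomputable def kochMap (i : ℕ) : ℂ →ᵃ[ℂ] ℂ := lineMap (kochNode i) (kochNode (i + 1))

lemma kochMap_zero (i : ℕ) : kochMap i 0 = kochNode i := AffineMap.lineMap_apply_zero _ _

lemma kochMap_one (i : ℕ) : kochMap i 1 = kochNode (i + 1) := AffineMap.lineMap_apply_one _ _

lemma kochMap_apply (i : ℕ) (z : ℂ) :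
    kochMap i z = z * (kochNode (i + 1) - kochNode i) + kochNode i :=
  AffineMap.lineMap_apply_module' _ _ _

lemma dist_kochNode_succ {i : ℕ} (hi : i < 4) : dist (kochNode i) (kochNode (i + 1)) = 1 / 3 := by
  rw [Complex.dist_eq_re_im, Real.sqrt_eq_iff_eq_sq (by positivity) (by norm_num)]
  interval_cases i <;> simp [kochNode, div_pow] <;> norm_num

lemma dist_kochMap {i : ℕ} (hi : i < 4) (z w : ℂ) :
    dist (kochMap i z) (kochMap i w) = dist z w / 3 := by
  rw [kochMap, dist_lineMap_lineMap, dist_kochNode_succ hi, mul_one_div]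

lemma kochNode_reflect {i : ℕ} (hi : i ≤ 4) : kochNode (4 - i) = 1 - conj (kochNode i) := by
  interval_cases i <;> simp [kochNode, Complex.ext_iff, map_ofNat] <;> norm_num

lemma kochMap_reflect {i : ℕ} (hi : i < 4) (z : ℂ) :
    kochMap (3 - i) (1 - conj z) = 1 - conj (kochMap i z) := by
  have hstart : kochNode (3 - i) = 1 - conj (kochNode (i + 1)) := by
    rw [← kochNode_reflect hi]; congr 1; omega
  have hend : kochNode (3 - i + 1) = 1 - conj (kochNode i) := by
    rw [← kochNode_reflect hi.le]; congr 1; omega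
  simp only [kochMap_apply, hstart, hend, map_add, map_mul, map_sub]
  ring

end Generator

section Vertices

/-- The Koch vertex `K_n k` as a complex number, so that similarities of the plane become
complex affine maps. -/
noncomputable def kochPoint (n k : ℕ) : ℂ := ⟨koch n k 0, koch n k 1⟩

lemma dist_koch (n a b : ℕ) :
    dist (koch n a) (koch n b) = dist (kochPoint n a) (kochPoint n b) := by
  simp [EuclideanSpace.dist_eq, Complex.dist_eq_re_im, kochPoint, Real.dist_eq]

lemma kochPoint_succ (n k : ℕ) {r : ℕ} (hr : r ≤ 4) :
    kochPoint (n + 1) (4 * k + r) =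
      lineMap (kochPoint n k) (kochPoint n (k + 1)) (kochNode r) := by
  have hdiv : ∀ s < 4, (4 * k + s) / 4 = k := by omega
  rw [AffineMap.lineMap_apply_module']
  interval_cases r <;> apply Complex.ext <;>
    simp [kochPoint, koch, kochNode, hdiv, rot90, pt] <;> ring

lemma kochPoint_zero (n : ℕ) : kochPoint n 0 = 0 := by
  induction n with
  | zero => simp [kochPoint, koch, pt, Complex.ext_iff]
  | succ n ih => simpa [kochNode, ih] using kochPoint_succ n 0 (r := 0) (by norm_num)

lemma kochPoint_four_pow (n : ℕ) : kochPoint n (4 ^ n) = 1 := by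
  induction n with
  | zero => simp [kochPoint, koch, pt, Complex.ext_iff]
  | succ n ih =>
    simpa [kochNode, ih, pow_succ'] using kochPoint_succ n (4 ^ n) (r := 0) (by norm_num)

lemma kochPoint_zero_one : kochPoint 0 1 = 1 := kochPoint_four_pow 0

lemma dist_kochPoint_succ {n k : ℕ} (hk : k < 4 ^ n) :
    dist (kochPoint n k) (kochPoint n (k + 1)) = (1 / 3) ^ n := by
  induction n generalizing k with
  | zero =>
    obtain rfl : k = 0 := by simpa using hk
    simp [kochPoint_zero, kochPoint_zero_one]
  | succ n ih =>
    have hr : k % 4 < 4 := Nat.mod_lt _ (by norm_num)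
    rw [← Nat.div_add_mod k 4, add_assoc, kochPoint_succ n _ hr.le, kochPoint_succ n _ hr,
      dist_lineMap_lineMap, dist_kochNode_succ hr, ih (by omega), pow_succ']

lemma kochPoint_block (n : ℕ) {i r : ℕ} (hi : i < 4) (hr : r ≤ 4 ^ n) :
    kochPoint (n + 1) (4 ^ n * i + r) = kochMap i (kochPoint n r) := by
  induction n generalizing r with
  | zero =>
    have hnode : kochPoint 1 (i + r) = kochNode (i + r) := by
      simpa [kochPoint_zero, kochPoint_zero_one, AffineMap.lineMap_apply] using
        kochPoint_succ 0 0 (r := i + r) (by rw [pow_zero] at hr; omega)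
    rw [pow_zero, one_mul, hnode]
    rcases Nat.le_one_iff_eq_zero_or_eq_one.1 hr with rfl | rfl
    · rw [kochPoint_zero, kochMap_zero, add_zero]
    · rw [kochPoint_zero_one, kochMap_one]
  | succ n ih =>
    obtain ⟨q, hq, s, hs, rfl⟩ :=
      exists_lt_exists_le_eq_mul_add (Nat.pow_pos four_pos) (pow_succ' 4 n ▸ hr)
    have hindex : 4 ^ (n + 1) * i + (4 * q + s) = 4 * (4 ^ n * i + q) + s := by ring
    rw [hindex, kochPoint_succ (n + 1) _ hs, kochPoint_succ n q hs, AffineMap.apply_lineMap,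
      ← ih hq.le, ← ih hq, add_assoc]

lemma exists_block {n k : ℕ} (hk : k ≤ 4 ^ (n + 1)) :
    ∃ i < 4, ∃ r ≤ 4 ^ n, k = 4 ^ n * i + r :=
  exists_lt_exists_le_eq_mul_add four_pos (pow_succ 4 n ▸ hk)

lemma kochPoint_reflect {n k : ℕ} (hk : k ≤ 4 ^ n) :
    kochPoint n (4 ^ n - k) = 1 - conj (kochPoint n k) := by
  induction n generalizing k with
  | zero =>
    rcases Nat.le_one_iff_eq_zero_or_eq_one.1 hk with rfl | rfl <;>
      simp [kochPoint_zero, kochPoint_zero_one]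
  | succ n ih =>
    obtain ⟨i, hi, r, hr, rfl⟩ := exists_block hk
    have hindex : 4 ^ (n + 1) - (4 ^ n * i + r) = 4 ^ n * (3 - i) + (4 ^ n - r) := by
      rw [pow_succ]
      interval_cases i <;> omega
    rw [hindex, kochPoint_block n (by omega) (Nat.sub_le _ _), kochPoint_block n hi hr, ih hr,
      kochMap_reflect hi]

end Vertices

section Triangle

/-- The imaginary part scaled by `√3`: the Koch generator has rational coordinates with respect
to `Complex.re` and `height`. -/
noncomputable def height (z : ℂ) : ℝ := √3 * z.im

/-- The triangle with vertices `0`, `1` and `kochNode 2`, which contains the Koch curve. -/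
def kochTriangle : Set ℂ := {z | 0 ≤ height z ∧ height z ≤ z.re ∧ height z ≤ 1 - z.re}

lemma sq_norm_eq_re_sq_add_height_sq (z : ℂ) : ‖z‖ ^ 2 = z.re ^ 2 + height z ^ 2 / 3 := by
  rw [Complex.sq_norm, Complex.normSq_apply, height, mul_pow, Real.sq_sqrt zero_le_three]
  ring

lemma re_mul_eq_sub_height (z w : ℂ) : (z * w).re = z.re * w.re - height z * height w / 3 := by
  rw [Complex.mul_re, height, height]
  linear_combination z.im * w.im / 3 * Real.sq_sqrt zero_le_three

lemma height_mul (z w : ℂ) : height (z * w) = z.re * height w + height z * w.re := by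
  simp only [height, Complex.mul_im]
  ring

lemma height_add (z w : ℂ) : height (z + w) = height z + height w := by
  simp only [height, Complex.add_im, mul_add]

lemma height_sub (z w : ℂ) : height (z - w) = height z - height w := by
  simp only [height, Complex.sub_im, mul_sub]

lemma height_kochNode (i : ℕ) : height (kochNode i) = if i = 2 then 1 / 2 else 0 := by
  have h : √3 * (√3 / 6) = 1 / 2 := by linarith [Real.mul_self_sqrt zero_le_three]
  rcases i with _ | _ | _ | _ | _ <;> simp [height, kochNode, h]

lemma kochMap_mem_kochTriangle {i : ℕ} (hi : i < 4) {z : ℂ} (hz : z ∈ kochTriangle) :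
    kochMap i z ∈ kochTriangle := by
  obtain ⟨hbase, hleft, hright⟩ := hz
  simp only [kochTriangle, Set.mem_ofPred_eq, kochMap_apply, height_add, height_mul, height_sub,
    Complex.add_re, re_mul_eq_sub_height, Complex.sub_re, height_kochNode]
  interval_cases i <;> norm_num [kochNode] <;> refine ⟨?_, ?_, ?_⟩ <;> linarith

lemma re_kochMap_mem_Icc {i : ℕ} (hi : i < 4) {z : ℂ} (hz : z ∈ kochTriangle) :
    (kochMap i z).re ∈ Set.Icc (kochNode i).re (kochNode (i + 1)).re := by
  obtain ⟨hbase, hleft, hright⟩ := hz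
  simp only [Set.mem_Icc, kochMap_apply, Complex.add_re, re_mul_eq_sub_height, Complex.sub_re,
    height_sub, height_kochNode]
  interval_cases i <;> norm_num [kochNode] <;> constructor <;> linarith

lemma re_kochNode_monotone : Monotone fun i => (kochNode i).re := by
  refine monotone_nat_of_le_succ fun i => ?_
  rcases i with _ | _ | _ | _ | _ <;> norm_num [kochNode]

lemma one_sixth_le_re_kochNode_succ_sub {i : ℕ} (hi : i < 4) :
    1 / 6 ≤ (kochNode (i + 1)).re - (kochNode i).re := by
  interval_cases i <;> norm_num [kochNode]

lemma kochTriangle_subset_closedBall : kochTriangle ⊆ Metric.closedBall (1 / 2) (1 / 2) := by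
  rintro z ⟨hbase, hleft, hright⟩
  have hmul : height z * height z ≤ z.re * (1 - z.re) :=
    mul_le_mul hleft hright hbase (hbase.trans hleft)
  have hre : (z - 1 / 2).re = z.re - 1 / 2 := by norm_num
  have hheight : height (z - 1 / 2) = height z := by simp [height]
  rw [mem_closedBall_iff_norm]
  refine le_of_sq_le_sq ?_ (by norm_num)
  rw [sq_norm_eq_re_sq_add_height_sq, hre, hheight]
  linarith [mul_self_nonneg (height z)]

lemma dist_le_one_of_mem_kochTriangle {z w : ℂ} (hz : z ∈ kochTriangle) (hw : w ∈ kochTriangle) :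
    dist z w ≤ 1 := by
  have hz' : dist z (1 / 2) ≤ 1 / 2 := kochTriangle_subset_closedBall hz
  have hw' : dist w (1 / 2) ≤ 1 / 2 := kochTriangle_subset_closedBall hw
  linarith [dist_triangle_right z w (1 / 2)]

lemma kochPoint_mem_kochTriangle {n k : ℕ} (hk : k ≤ 4 ^ n) : kochPoint n k ∈ kochTriangle := by
  induction n generalizing k with
  | zero =>
    rcases Nat.le_one_iff_eq_zero_or_eq_one.1 hk with rfl | rfl <;>
      simp [kochPoint_zero, kochPoint_zero_one, kochTriangle, height]
  | succ n ih =>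
    obtain ⟨i, hi, r, hr, rfl⟩ := exists_block hk
    exact kochPoint_block n hi hr ▸ kochMap_mem_kochTriangle hi (ih hr)

lemma dist_kochPoint_le_one {n a b : ℕ} (ha : a ≤ 4 ^ n) (hb : b ≤ 4 ^ n) :
    dist (kochPoint n a) (kochPoint n b) ≤ 1 :=
  dist_le_one_of_mem_kochTriangle (kochPoint_mem_kochTriangle ha) (kochPoint_mem_kochTriangle hb)

end Triangle

section Arcs

lemma dist_kochPoint_block (n : ℕ) {i r s : ℕ} (hi : i < 4) (hr : r ≤ 4 ^ n) (hs : s ≤ 4 ^ n) :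
    dist (kochPoint (n + 1) (4 ^ n * i + r)) (kochPoint (n + 1) (4 ^ n * i + s)) =
      dist (kochPoint n r) (kochPoint n s) / 3 := by
  rw [kochPoint_block n hi hr, kochPoint_block n hi hs, dist_kochMap hi]

lemma dist_kochPoint_reflect {n a b : ℕ} (ha : a ≤ 4 ^ n) (hb : b ≤ 4 ^ n) :
    dist (kochPoint n (4 ^ n - a)) (kochPoint n (4 ^ n - b)) =
      dist (kochPoint n a) (kochPoint n b) := by
  rw [kochPoint_reflect ha, kochPoint_reflect hb, dist_sub_left, Complex.dist_conj_conj]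

lemma re_kochPoint_block_mem_Icc {n i r : ℕ} (hi : i < 4) (hr : r ≤ 4 ^ n) :
    (kochPoint (n + 1) (4 ^ n * i + r)).re ∈ Set.Icc (kochNode i).re (kochNode (i + 1)).re :=
  kochPoint_block n hi hr ▸ re_kochMap_mem_Icc hi (kochPoint_mem_kochTriangle hr)

lemma one_sixth_le_dist_kochPoint {n i j r s : ℕ} (hij : i + 1 < j) (hj : j < 4)
    (hr : r ≤ 4 ^ n) (hs : s ≤ 4 ^ n) :
    1 / 6 ≤ dist (kochPoint (n + 1) (4 ^ n * i + r)) (kochPoint (n + 1) (4 ^ n * j + s)) := by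
  have hleft := (re_kochPoint_block_mem_Icc (by omega : i < 4) hr).2
  have hright := (re_kochPoint_block_mem_Icc hj hs).1
  have hgap := one_sixth_le_re_kochNode_succ_sub (by omega : i + 1 < 4)
  have hmono : (kochNode (i + 2)).re ≤ (kochNode j).re := re_kochNode_monotone hij
  rw [dist_comm, Complex.dist_eq]
  refine le_trans ?_ (Complex.re_le_norm _)
  rw [Complex.sub_re]
  linarith

lemma one_third_le_dist_kochPoint_zero {n b : ℕ} (hnb : 4 ^ n ≤ b) (hb : b ≤ 4 ^ (n + 1)) :
    1 / 3 ≤ dist (kochPoint (n + 1) 0) (kochPoint (n + 1) b) := by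
  obtain ⟨d, rfl⟩ := Nat.exists_eq_add_of_le hnb
  obtain ⟨i, hi, r, hr, rfl⟩ : ∃ i < 3, ∃ r ≤ 4 ^ n, d = 4 ^ n * i + r :=
    exists_lt_exists_le_eq_mul_add three_pos (by rw [pow_succ] at hb; omega)
  have hindex : 4 ^ n + (4 ^ n * i + r) = 4 ^ n * (i + 1) + r := by ring
  rw [hindex, kochPoint_zero, dist_zero_left]
  calc (1 / 3 : ℝ) = (kochNode 1).re := by norm_num [kochNode]
    _ ≤ (kochNode (i + 1)).re := re_kochNode_monotone (Nat.le_add_left 1 i)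
    _ ≤ (kochPoint (n + 1) (4 ^ n * (i + 1) + r)).re :=
      (re_kochPoint_block_mem_Icc (by omega) hr).1
    _ ≤ ‖kochPoint (n + 1) (4 ^ n * (i + 1) + r)‖ := Complex.re_le_norm _

lemma dist_kochPoint_le_of_initial_arc {n b c d : ℕ} (hc : c ≤ b) (hd : d ≤ b) (hb : b ≤ 4 ^ n) :
    dist (kochPoint n c) (kochPoint n d) ≤ 3 * dist (kochPoint n 0) (kochPoint n b) := by
  induction n generalizing b c d with
  | zero =>
    rcases Nat.le_one_iff_eq_zero_or_eq_one.1 hb with rfl | rfl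
    · simp [Nat.le_zero.1 hc, Nat.le_zero.1 hd]
    · refine (dist_kochPoint_le_one (hc.trans hb) (hd.trans hb)).trans ?_
      simp [kochPoint_zero, kochPoint_zero_one]
  | succ n ih =>
    rcases le_total b (4 ^ n) with hbn | hnb
    · have hscale : ∀ {k l}, k ≤ b → l ≤ b → dist (kochPoint (n + 1) k) (kochPoint (n + 1) l) =
          dist (kochPoint n k) (kochPoint n l) / 3 := fun hk hl => by
        simpa using dist_kochPoint_block n four_pos (hk.trans hbn) (hl.trans hbn)
      rw [hscale hc hd, hscale b.zero_le le_rfl]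
      linarith [ih hc hd hbn]
    · linarith [dist_kochPoint_le_one (hc.trans hb) (hd.trans hb),
        one_third_le_dist_kochPoint_zero hnb hb]

lemma dist_kochPoint_le_of_final_arc {n a c d : ℕ} (hc : a ≤ c) (hd : a ≤ d) (hcn : c ≤ 4 ^ n)
    (hdn : d ≤ 4 ^ n) :
    dist (kochPoint n c) (kochPoint n d) ≤ 3 * dist (kochPoint n a) (kochPoint n (4 ^ n)) := by
  rw [← dist_kochPoint_reflect hcn hdn, ← dist_kochPoint_reflect (hc.trans hcn) le_rfl,
    Nat.sub_self, dist_comm (kochPoint n (4 ^ n - a))]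
  exact dist_kochPoint_le_of_initial_arc (Nat.sub_le_sub_left hc _) (Nat.sub_le_sub_left hd _)
    (Nat.sub_le _ _)

end Arcs

section AdjacentBlocks

/-- The rotation by `60°` as a complex number: consecutive edges of the Koch generator differ by
the factor `sixthRoot` or `-sixthRoot`. -/
noncomputable def sixthRoot : ℂ := ⟨1 / 2, √3 / 2⟩

lemma norm_sixthRoot : ‖sixthRoot‖ = 1 := by
  rw [Complex.norm_eq_sqrt_sq_add_sq, Real.sqrt_eq_one, sixthRoot, div_pow, div_pow,
    Real.sq_sqrt zero_le_three]
  norm_num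

lemma kochNode_edge_succ {i : ℕ} (hi : i < 3) :
    kochNode (i + 2) - kochNode (i + 1) = (kochNode (i + 1) - kochNode i) * sixthRoot ∨
      kochNode (i + 2) - kochNode (i + 1) = (kochNode (i + 1) - kochNode i) * -sixthRoot := by
  have hsq := Real.sq_sqrt zero_le_three
  interval_cases i
  · left; apply Complex.ext <;> simp [kochNode, sixthRoot] <;> linarith
  · right; apply Complex.ext <;> simp [kochNode, sixthRoot] <;> linarith
  · left; apply Complex.ext <;> simp [kochNode, sixthRoot] <;> linarith

/-- Multiplication by `sixthRoot` takes the sector `0 ≤ arg u ≤ 60°` to the sector between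
`60°` and `120°`. -/
lemma two_mul_abs_re_sixthRoot_mul_le {u : ℂ} (hnonneg : 0 ≤ height u)
    (hle : height u ≤ 3 * u.re) : 2 * |(sixthRoot * u).re| ≤ ‖u‖ := by
  have hre : 2 * (sixthRoot * u).re = u.re - height u := by
    simp only [sixthRoot, height, Complex.mul_re]
    ring
  rw [← abs_two, ← abs_mul, hre]
  refine abs_le_of_sq_le_sq ?_ (norm_nonneg u)
  rw [sq_norm_eq_re_sq_add_height_sq]
  nlinarith [mul_nonneg hnonneg (sub_nonneg.2 hle)]

/-- Both `conj (1 - z)` and `w` have argument between `0°` and `30°`, so that of their product lies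
between `0°` and `60°`. -/
lemma two_mul_abs_inner_le_of_mem_kochTriangle {z w : ℂ} (hz : z ∈ kochTriangle)
    (hw : w ∈ kochTriangle) : 2 * |⟪1 - z, sixthRoot * w⟫_ℝ| ≤ ‖1 - z‖ * ‖w‖ := by
  obtain ⟨hz₀, -, hz₁⟩ := hz
  obtain ⟨hw₀, hw₁, -⟩ := hw
  have hre : (conj (1 - z)).re = 1 - z.re := by simp
  have hheight : height (conj (1 - z)) = height z := by simp [height]
  rw [Complex.inner, mul_assoc, mul_comm w, ← Complex.norm_conj (1 - z), ← norm_mul]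
  apply two_mul_abs_re_sixthRoot_mul_le
  · rw [height_mul, hre, hheight]
    have hz₂ : 0 ≤ 1 - z.re := hz₀.trans hz₁
    have hw₂ : 0 ≤ w.re := hw₀.trans hw₁
    positivity
  · rw [height_mul, re_mul_eq_sub_height, hre, hheight]
    linarith [mul_le_mul_of_nonneg_left hw₁ (hz₀.trans hz₁),
      mul_le_mul_of_nonneg_right hz₁ (hw₀.trans hw₁), mul_le_mul hz₁ hw₁ hw₀ (hz₀.trans hz₁)]

lemma dist_add_dist_le_six_mul_dist_kochMap {i : ℕ} (hi : i < 3) {z w : ℂ}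
    (hz : z ∈ kochTriangle) (hw : w ∈ kochTriangle) :
    dist z 1 + dist 0 w ≤ 6 * dist (kochMap i z) (kochMap (i + 1) w) := by
  obtain ⟨ζ, hζ, hedge, hangle⟩ : ∃ ζ : ℂ, ‖ζ‖ = 1 ∧
      kochNode (i + 2) - kochNode (i + 1) = (kochNode (i + 1) - kochNode i) * -ζ ∧
      2 * ⟪1 - z, ζ * w⟫_ℝ ≤ ‖1 - z‖ * ‖w‖ := by
    have habs := two_mul_abs_inner_le_of_mem_kochTriangle hz hw
    rcases kochNode_edge_succ hi with h | h
    · refine ⟨-sixthRoot, by rw [norm_neg, norm_sixthRoot], by rwa [neg_neg], ?_⟩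
      rw [neg_mul, inner_neg_right]
      linarith [neg_le_abs ⟪1 - z, sixthRoot * w⟫_ℝ]
    · refine ⟨sixthRoot, norm_sixthRoot, h, ?_⟩
      linarith [le_abs_self ⟪1 - z, sixthRoot * w⟫_ℝ]
  have hnorm : ‖ζ * w‖ = ‖w‖ := by rw [norm_mul, hζ, one_mul]
  have hdiff : kochMap (i + 1) w - kochMap i z =
      (kochNode (i + 1) - kochNode i) * (1 - z - ζ * w) := by
    rw [kochMap_apply, kochMap_apply]
    linear_combination w * hedge
  have hdist : dist (kochMap i z) (kochMap (i + 1) w) = ‖1 - z - ζ * w‖ / 3 := by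
    rw [dist_comm, Complex.dist_eq, hdiff, norm_mul, ← Complex.dist_eq, dist_comm,
      dist_kochNode_succ (by omega), one_div_mul_eq_div]
  have hsep := norm_add_norm_le_two_mul_norm_sub (hnorm.symm ▸ hangle)
  rw [hnorm] at hsep
  rw [hdist, dist_comm z, Complex.dist_eq, dist_zero_left]
  linarith

lemma dist_kochPoint_le_of_adjacent_blocks {n i r s c : ℕ} (hi : i < 3) (hr : r ≤ 4 ^ n)
    (hs : s ≤ 4 ^ n) (hrc : 4 ^ n * i + r ≤ c) (hcs : c ≤ 4 ^ n * (i + 1) + s) :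
    dist (kochPoint (n + 1) (4 ^ n * i + r)) (kochPoint (n + 1) c) ≤
      6 * dist (kochPoint (n + 1) (4 ^ n * i + r)) (kochPoint (n + 1) (4 ^ n * (i + 1) + s)) := by
  have hsep := dist_add_dist_le_six_mul_dist_kochMap hi (kochPoint_mem_kochTriangle hr)
    (kochPoint_mem_kochTriangle hs)
  rw [← kochPoint_block n (by omega) hr, ← kochPoint_block n (by omega) hs,
    ← kochPoint_four_pow n, ← kochPoint_zero n] at hsep
  have hjunction : 4 ^ n * (i + 1) + 0 = 4 ^ n * i + 4 ^ n := by ring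
  rcases le_total c (4 ^ n * (i + 1)) with hc | hc
  · obtain ⟨v, rfl⟩ := Nat.exists_eq_add_of_le ((Nat.le_add_right _ _).trans hrc)
    have hv : v ≤ 4 ^ n := by omega
    rw [dist_kochPoint_block n (by omega) hr hv]
    have hfinal := dist_kochPoint_le_of_final_arc le_rfl (Nat.le_of_add_le_add_left hrc) hr hv
    linarith [dist_nonneg (x := kochPoint n 0) (y := kochPoint n s)]
  · obtain ⟨v, rfl⟩ := Nat.exists_eq_add_of_le hc
    have hvs : v ≤ s := Nat.le_of_add_le_add_left hcs
    have htri := dist_triangle (kochPoint (n + 1) (4 ^ n * i + r))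
      (kochPoint (n + 1) (4 ^ n * i + 4 ^ n)) (kochPoint (n + 1) (4 ^ n * (i + 1) + v))
    rw [dist_kochPoint_block n (by omega) hr le_rfl, ← hjunction,
      dist_kochPoint_block n (by omega) (Nat.zero_le _) (hvs.trans hs)] at htri
    have hinitial := dist_kochPoint_le_of_initial_arc s.zero_le hvs hs
    linarith [dist_nonneg (x := kochPoint n r) (y := kochPoint n (4 ^ n))]

end AdjacentBlocks

section Spanner

theorem dist_kochPoint_le_six_mul_dist {n a b c : ℕ} (hac : a ≤ c) (hcb : c ≤ b)
    (hb : b ≤ 4 ^ n) :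
    dist (kochPoint n a) (kochPoint n c) ≤ 6 * dist (kochPoint n a) (kochPoint n b) := by
  rcases (hac.trans hcb).eq_or_lt with rfl | hab
  · rw [hcb.antisymm hac, dist_self, mul_zero]
  induction n generalizing a b c with
  | zero =>
    obtain ⟨rfl, rfl⟩ : a = 0 ∧ b = 1 := by rw [pow_zero] at hb; omega
    refine (dist_kochPoint_le_one (Nat.zero_le _) (hcb.trans hb)).trans ?_
    simp [kochPoint_zero, kochPoint_zero_one]
  | succ n ih =>
    obtain ⟨i, hi, r, hr, rfl⟩ := exists_block (hab.le.trans hb)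
    obtain ⟨j, hj, s, hs, rfl⟩ := exists_block hb
    have hij : i ≤ j := by
      by_contra! hji
      have := Nat.mul_le_mul_left (4 ^ n) hji
      rw [Nat.mul_succ] at this
      omega
    obtain rfl | rfl | hfar : j = i ∨ j = i + 1 ∨ i + 1 < j := by omega
    · obtain ⟨v, rfl⟩ := Nat.exists_eq_add_of_le ((Nat.le_add_right _ _).trans hac)
      rw [add_le_add_iff_left] at hac hcb
      rw [dist_kochPoint_block n hi hr (hcb.trans hs), dist_kochPoint_block n hi hr hs]
      linarith [ih hac hcb hs (Nat.lt_of_add_lt_add_left hab)]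
    · exact dist_kochPoint_le_of_adjacent_blocks (by omega) hr hs hac hcb
    · linarith [one_sixth_le_dist_kochPoint hfar hj hr hs,
        dist_kochPoint_le_one (hac.trans (hcb.trans hb)) (hcb.trans hb)]

theorem koch_frechetMatchingWithin {n a b : ℕ} (hab : a ≤ b) (hb : b ≤ 4 ^ n) :
    FrechetMatchingWithin (m := b - a) (fun j => koch n (a + j)) (koch n a) (koch n b)
      (6 * dist (koch n a) (koch n b)) := by
  have hdist : ∀ j : Fin (b - a + 1),
      dist (koch n (a + j)) (koch n a) ≤ 6 * dist (koch n a) (koch n b) := fun j => by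
    rw [dist_comm, dist_koch, dist_koch]
    exact dist_kochPoint_le_six_mul_dist (Nat.le_add_right a j) (by omega) hb
  simpa [Nat.add_sub_cancel' hab] using frechetMatchingWithin_of_dist_le _ hdist

theorem four_thirds_pow_le_length_of_koch_walk {n m : ℕ} {q : Fin (m + 1) → ℕ} (hq₀ : q 0 = 0)
    (hq₁ : q (Fin.last m) = 4 ^ n) (hq : ∀ j, q j ≤ 4 ^ n)
    (hstep : ∀ j : Fin m, q j.succ = q j.castSucc + 1 ∨ q j.castSucc = q j.succ + 1) :
    (4 / 3 : ℝ) ^ n ≤ ∑ j : Fin m, dist (koch n (q j.castSucc)) (koch n (q j.succ)) := by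
  have hlength : ∀ j : Fin m,
      dist (koch n (q j.castSucc)) (koch n (q j.succ)) = (1 / 3 : ℝ) ^ n := fun j => by
    have hcast := hq j.castSucc
    have hsucc := hq j.succ
    rw [dist_koch]
    rcases hstep j with h | h
    · rw [h, dist_kochPoint_succ (by omega)]
    · rw [h, dist_comm, dist_kochPoint_succ (by omega)]
  have hm : 4 ^ n ≤ m := by
    simpa [hq₀, hq₁] using apply_last_le_apply_zero_add q fun j => by have := hstep j; omega
  calc (4 / 3 : ℝ) ^ n = (4 ^ n : ℕ) * (1 / 3) ^ n := by
        rw [Nat.cast_pow, ← mul_pow]; norm_num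
    _ ≤ m * (1 / 3) ^ n := by gcongr
    _ = ∑ j : Fin m, dist (koch n (q j.castSucc)) (koch n (q j.succ)) := by simp [hlength]

end Spanner

/-- For every `t ≥ 1` there is a stage `n` of the Koch construction such that the path
graph `F_n` is a `6`-Fréchet-spanner but not a `t`-spanner: (a) the path between any two
vertices admits a Fréchet matching to the straight segment within `6` times their distance,
while (b) every walk in `F_n` between the two extreme vertices is longer than `t` times
their distance. -/
theorem koch_frechet_spanner_not_t_spanner (t : ℝ) (ht : 1 ≤ t) :
    ∃ n : ℕ,
      (∀ a b : ℕ, a < b → b ≤ 4 ^ n →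
        FrechetMatchingWithin (m := b - a) (fun j => koch n (a + j)) (koch n a) (koch n b)
          (6 * dist (koch n a) (koch n b))) ∧
      (∀ m : ℕ, 1 ≤ m → ∀ q : Fin (m + 1) → ℕ,
        q 0 = 0 → q (Fin.last m) = 4 ^ n → (∀ j, q j ≤ 4 ^ n) →
        (∀ j : Fin m, q j.succ = q j.castSucc + 1 ∨ q j.castSucc = q j.succ + 1) →
        t * dist (koch n 0) (koch n (4 ^ n)) <
          ∑ j : Fin m, dist (koch n (q j.castSucc)) (koch n (q j.succ))) := by
  obtain ⟨n, hn⟩ := pow_unbounded_of_one_lt t (by norm_num : (1 : ℝ) < 4 / 3)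
  refine ⟨n, fun a b hab hb => koch_frechetMatchingWithin hab.le hb,
    fun m _ q hq₀ hq₁ hq hstep => ?_⟩
  have hends : dist (koch n 0) (koch n (4 ^ n)) = 1 := by
    rw [dist_koch, kochPoint_zero, kochPoint_four_pow, dist_zero_left, norm_one]
  rw [hends, mul_one]
  exact hn.trans_le (four_thirds_pow_le_length_of_koch_walk hq₀ hq₁ hq hstep)
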